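/- Let F(x,t) = x² A_{n−2}(x) + B_n(x) t + O(t²) be a family of polynomials of the first kind, where the subscripts denote degrees, A_{n−2}(0)·B_n(0) ≠ 0 and A_{n−2}(x) is square-free. Then ver(F) = −4 · B_n(0) · A_{n−2}(0)³. -/

import Mathlib

open Finset Polynomial

noncomputable section

/-- The limit of a Hahn (Puiseux) series as `t → 0`: the coefficient of the lowest
power of `t` occurring in it (its leading coefficient). -/
def lim0 {L : Type*} [Field L] (f : HahnSeries ℚ L) : L := f.coeff f.order

/-- `s` is a Puiseux series with nonnegative support and constant term `a`
(i.e. `s(0) = a`). -/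
def HasConst {L : Type*} [Field L] (s : HahnSeries ℚ L) (a : L) : Prop :=
  s.coeff 0 = a ∧ ∀ q < (0 : ℚ), s.coeff q = 0

/-- The natural ring map `A[[t]] → L((t^ℚ))` induced by `φ : A →+* L`. -/
def Phi {A L : Type*} [CommRing A] [Field L] (φ : A →+* L) :
    PowerSeries A →+* HahnSeries ℚ L :=
  (HahnSeries.ofPowerSeries ℚ L).comp (PowerSeries.map φ)

/-- The polynomial with power-series coefficients determined by a family
`F(x,t) = Σ_i p_i(x) t^i` of polynomials of degree at most `n'`. -/
def fam {A : Type*} [CommRing A] (n' : ℕ) (p : ℕ → Polynomial A) :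
    Polynomial (PowerSeries A) :=
  ∑ j ∈ Finset.range (n' + 1), Polynomial.C (PowerSeries.mk fun i => (p i).coeff j) * X ^ j

/-- `∏_{q ≠ q'} (S q − S q')`, the product of the differences of all (ordered) pairs of
distinct `t`-roots.  For a monic family it equals `(-1)^(N(N-1)/2)` times the discriminant
`Δ_{A[[t]]}(F) = ∏_{q<q'} (S q − S q')²`; in particular it is nonzero iff
`Δ_{A[[t]]}(F) ≠ 0`. -/
def rootsSep {L : Type*} [Field L] {ι : Type*} [Fintype ι] [DecidableEq ι]
    (S : ι → HahnSeries ℚ L) : HahnSeries ℚ L :=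
  ∏ q ∈ Finset.univ.offDiag, (S q.1 - S q.2)

/-- `Δ(F, f_ν)(a ν ℓ, t)_0`: the limit of the generalized formal discriminant of the family
with respect to `f_ν = ∏_ℓ (x − a ν ℓ)`, evaluated at `x = a ν ℓ`.  Here the `t`-roots
approaching the roots of `f_ν` are grouped as `s ν · i` for `i` in `Fin (n ν)`; following
Definition 2.3, `s'_i(x) = f_ν(x) − ∏_ℓ (x − s ν ℓ i)`, so that
`s'_i(x) − s'_j(x) = ∏_ℓ (x − s ν ℓ j) − ∏_ℓ (x − s ν ℓ i)`, and
`Δ(F,f_ν)(x,t) = [∏_{others} (x − s_ℓ)]^(2 n ν − 2) ∏_{i<j} (s'_i − s'_j)²`. -/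
def gdlim {L : Type*} [Field L] {m : ℕ} (d n : Fin m → ℕ)
    (a : (ν : Fin m) → Fin (d ν) → L)
    (s : (ν : Fin m) → (ℓ : Fin (d ν)) → Fin (n ν) → HahnSeries ℚ L)
    (ν : Fin m) (ℓ : Fin (d ν)) : L :=
  lim0 ((∏ ν' ∈ Finset.univ.erase ν, ∏ ℓ', ∏ i', (HahnSeries.C (a ν ℓ) - s ν' ℓ' i')) ^
      (2 * n ν - 2) *
    ∏ q ∈ Finset.univ.filter (fun q : Fin (n ν) × Fin (n ν) => q.1 < q.2),
      ((∏ ℓ', (HahnSeries.C (a ν ℓ) - s ν ℓ' q.2)) -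
        ∏ ℓ', (HahnSeries.C (a ν ℓ) - s ν ℓ' q.1)) ^ 2)

/-- The discriminant `Δ(f) = ∏_{ℓ<ℓ'} (a ℓ − a ℓ')²` of a monic split polynomial
`f = ∏_ℓ (x − a ℓ)`. -/
def discOf {L : Type*} [Field L] {d : ℕ} (a : Fin d → L) : L :=
  ∏ q ∈ Finset.univ.filter (fun q : Fin d × Fin d => q.1 < q.2), (a q.1 - a q.2) ^ 2

/-- The vertex `ver(F)` of the family (Definition 3.1), computed from the root data:
`ver(F) = ∏_{ν,ℓ} Δ(F,f_ν)(a_{νℓ},t)_0 · ∏_{ν<ν'} res(f_ν,f_{ν'})^(2(n_ν+n_{ν'}−n_ν n_{ν'}))`,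
where `res(f_ν, f_{ν'}) = ∏_{ℓ,ℓ'} (a ν ℓ − a ν' ℓ')`. -/
def ver {L : Type*} [Field L] {m : ℕ} (d n : Fin m → ℕ)
    (a : (ν : Fin m) → Fin (d ν) → L)
    (s : (ν : Fin m) → (ℓ : Fin (d ν)) → Fin (n ν) → HahnSeries ℚ L) : L :=
  (∏ ν, ∏ ℓ, gdlim d n a s ν ℓ) *
    ∏ ν, ∏ ν' ∈ Finset.Ioi ν,
      (∏ ℓ, ∏ ℓ', (a ν ℓ - a ν' ℓ')) ^
        (2 * ((n ν : ℤ) + (n ν' : ℤ) - (n ν : ℤ) * (n ν' : ℤ)))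

/-!
Write `F = (x − u)(x − v) Q` over the Puiseux series, where `Q` collects the leading coefficient
and the simple `t`-roots, so that `Q` specializes to `A` at `t = 0`. The coefficients of `1` and
`x` in `F` are `u v Q₀` and `u v Q₁ − (u + v) Q₀`. The first has leading term `B(0) t` and the
second has order at least `1`, while `Q₀` has leading term `A(0)` and `Q₁` has order at least `0`.
Hence `u v` has leading term `(B(0) / A(0)) t`, whereas `u + v` has order at least `1`, and in
`(u − v)² = (u + v)² − 4 u v` the last term dominates.
-/

section DoubleRoot

variable {Γ R : Type*} [AddCommMonoid Γ] [LinearOrder Γ] [IsOrderedCancelAddMonoid Γ]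
  [CommRing R] [NoZeroDivisors R]

theorem leadingCoeff_sub_sq (h2 : (2 : R) ≠ 0) {u v : HahnSeries Γ R}
    (h : (u * v).orderTop < ((u + v) ^ 2).orderTop) :
    ((u - v) ^ 2).leadingCoeff = -4 * (u * v).leadingCoeff := by
  have h4 : (-4 : R) ≠ 0 := by
    rw [neg_ne_zero, show (4 : R) = 2 * 2 by norm_num]
    exact mul_ne_zero h2 h2
  have hC : (HahnSeries.C (-4 : R) : HahnSeries Γ R).orderTop = 0 := HahnSeries.orderTop_single h4
  have hexpand : (u - v) ^ 2 = HahnSeries.C (-4) * (u * v) + (u + v) ^ 2 := by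
    rw [map_neg, map_ofNat]
    ring
  have hdom : (HahnSeries.C (-4) * (u * v)).orderTop < ((u + v) ^ 2).orderTop := by
    rwa [HahnSeries.orderTop_mul, hC, zero_add]
  rw [hexpand, HahnSeries.leadingCoeff_add_eq_left hdom, HahnSeries.leadingCoeff_mul]
  simp only [HahnSeries.C_apply, HahnSeries.leadingCoeff_of_single]

theorem coeff_zero_X_sub_C_mul_X_sub_C_mul {S : Type*} [CommRing S] (u v : S) (Q : S[X]) :
    ((X - C u) * (X - C v) * Q).coeff 0 = u * v * Q.coeff 0 := by
  simp [mul_coeff_zero]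

theorem coeff_one_X_sub_C_mul_X_sub_C_mul {S : Type*} [CommRing S] (u v : S) (Q : S[X]) :
    ((X - C u) * (X - C v) * Q).coeff 1 = u * v * Q.coeff 1 - (u + v) * Q.coeff 0 := by
  simp only [mul_assoc, coeff_X_sub_C_mul (a := 0), mul_coeff_zero, coeff_sub, coeff_X_zero,
    coeff_C_zero]
  ring

theorem orderTop_mul_le_orderTop_add_of_le_coeff_one {u v : HahnSeries Γ R}
    {Q : (HahnSeries Γ R)[X]}
    (hQ0 : (Q.coeff 0).orderTop = 0) (hQ1 : 0 ≤ (Q.coeff 1).orderTop)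
    (h : (u * v).orderTop ≤ (((X - C u) * (X - C v) * Q).coeff 1).orderTop) :
    (u * v).orderTop ≤ (u + v).orderTop := by
  have hsum : (u + v) * Q.coeff 0 =
      u * v * Q.coeff 1 - ((X - C u) * (X - C v) * Q).coeff 1 := by
    rw [coeff_one_X_sub_C_mul_X_sub_C_mul]
    ring
  calc (u * v).orderTop
      ≤ min (u * v * Q.coeff 1).orderTop (((X - C u) * (X - C v) * Q).coeff 1).orderTop :=
        le_min (by rw [HahnSeries.orderTop_mul _ (Q.coeff 1)]; exact le_add_of_nonneg_right hQ1) h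
    _ ≤ ((u + v) * Q.coeff 0).orderTop := hsum ▸ HahnSeries.min_orderTop_le_orderTop_sub
    _ = (u + v).orderTop := by rw [HahnSeries.orderTop_mul, hQ0, add_zero]

theorem leadingCoeff_sub_sq_of_eq_mul (h2 : (2 : R) ≠ 0) {u v : HahnSeries Γ R}
    {F Q : (HahnSeries Γ R)[X]} (hF : F = (X - C u) * (X - C v) * Q)
    (hQ0 : (Q.coeff 0).orderTop = 0) (hQ1 : 0 ≤ (Q.coeff 1).orderTop) {g : Γ} (hg : 0 < g)
    (hF0 : (F.coeff 0).orderTop = g) (hF1 : g ≤ (F.coeff 1).orderTop) :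
    (Q.coeff 0).leadingCoeff * ((u - v) ^ 2).leadingCoeff = -4 * (F.coeff 0).leadingCoeff := by
  have hF0_eq : F.coeff 0 = u * v * Q.coeff 0 := by
    rw [hF, coeff_zero_X_sub_C_mul_X_sub_C_mul]
  have huv : (u * v).orderTop = g := by
    rw [← hF0, hF0_eq, HahnSeries.orderTop_mul _ (Q.coeff 0), hQ0, add_zero]
  have hadd : (g : WithTop Γ) ≤ (u + v).orderTop :=
    huv ▸ orderTop_mul_le_orderTop_add_of_le_coeff_one hQ0 hQ1 (huv ▸ hF ▸ hF1)
  have hdom : (u * v).orderTop < ((u + v) ^ 2).orderTop := by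
    rw [huv, sq, HahnSeries.orderTop_mul]
    exact (WithTop.coe_lt_coe.2 (lt_add_of_pos_left g hg)).trans_le (add_le_add hadd hadd)
  rw [leadingCoeff_sub_sq h2 hdom, hF0_eq, HahnSeries.leadingCoeff_mul _ (Q.coeff 0)]
  ring

end DoubleRoot

theorem lim0_eq_leadingCoeff {L : Type*} [Field L] (f : HahnSeries ℚ L) :
    lim0 f = f.leadingCoeff :=
  HahnSeries.leadingCoeff_eq.symm

section Specialization

variable {L : Type*} [Field L] {s t : HahnSeries ℚ L} {a b : L}

theorem HasConst.orderTop_nonneg (hs : HasConst s a) : 0 ≤ s.orderTop :=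
  HahnSeries.le_orderTop_iff_forall.2 fun q hq => hs.2 q (WithTop.coe_lt_coe.1 hq)

theorem HasConst.orderTop_eq_zero (hs : HasConst s a) (ha : a ≠ 0) : s.orderTop = 0 :=
  le_antisymm (HahnSeries.orderTop_le_of_coeff_ne_zero (hs.1 ▸ ha)) hs.orderTop_nonneg

theorem HasConst.leadingCoeff_eq (hs : HasConst s a) (ha : a ≠ 0) : s.leadingCoeff = a := by
  have hs0 : s.orderTop = ((0 : ℚ) : WithTop ℚ) := hs.orderTop_eq_zero ha
  rw [HahnSeries.leadingCoeff, hs0, WithTop.recTopCoe_coe, hs.1]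

theorem hasConst_C (a : L) : HasConst (HahnSeries.C a) a :=
  ⟨HahnSeries.coeff_single_same 0 a, fun _ hq => HahnSeries.coeff_single_of_ne hq.ne⟩

theorem HasConst.sub (hs : HasConst s a) (ht : HasConst t b) : HasConst (s - t) (a - b) :=
  ⟨by simp [hs.1, ht.1], fun q hq => by simp [hs.2 q hq, ht.2 q hq]⟩

theorem hasConst_iff_orderTop_sub_C_pos : HasConst s a ↔ 0 < (s - HahnSeries.C a).orderTop := by
  constructor
  · intro hs
    have hsub : HasConst (s - HahnSeries.C a) 0 := sub_self a ▸ hs.sub (hasConst_C a)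
    exact hsub.orderTop_nonneg.lt_of_ne (HahnSeries.orderTop_ne_of_coeff_eq_zero hsub.1).symm
  · intro hpos
    have hcoeff (q : ℚ) (hq : q ≤ 0) : s.coeff q = (HahnSeries.C a).coeff q := by
      rw [← sub_eq_zero, ← HahnSeries.coeff_sub]
      exact HahnSeries.coeff_eq_zero_of_lt_orderTop ((WithTop.coe_le_coe.2 hq).trans_lt hpos)
    exact ⟨(hcoeff 0 le_rfl).trans (hasConst_C a).1,
      fun q hq => (hcoeff q hq.le).trans ((hasConst_C a).2 q hq)⟩

theorem HasConst.mul (hs : HasConst s a) (ht : HasConst t b) : HasConst (s * t) (a * b) := by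
  rw [hasConst_iff_orderTop_sub_C_pos]
  have hexpand : s * t - HahnSeries.C (a * b) =
      (s - HahnSeries.C a) * t + HahnSeries.C a * (t - HahnSeries.C b) := by
    rw [map_mul]
    ring
  have hleft : 0 < ((s - HahnSeries.C a) * t).orderTop := by
    rw [HahnSeries.orderTop_mul]
    exact (hasConst_iff_orderTop_sub_C_pos.1 hs).trans_le
      (le_add_of_nonneg_right ht.orderTop_nonneg)
  have hright : 0 < (HahnSeries.C a * (t - HahnSeries.C b)).orderTop := by
    rw [HahnSeries.orderTop_mul]
    exact (hasConst_iff_orderTop_sub_C_pos.1 ht).trans_le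
      (le_add_of_nonneg_left (hasConst_C a).orderTop_nonneg)
  exact hexpand ▸ (lt_min hleft hright).trans_le HahnSeries.min_orderTop_le_orderTop_add

theorem HasConst.coeff_prod_X_sub_C {ι : Type*} (S : Finset ι) {r : ι → HahnSeries ℚ L}
    {a : ι → L} (hr : ∀ i ∈ S, HasConst (r i) (a i)) (k : ℕ) :
    HasConst ((∏ i ∈ S, (X - C (r i))).coeff k) ((∏ i ∈ S, (X - C (a i))).coeff k) := by
  classical
  induction S using Finset.induction_on generalizing k with
  | empty =>
    by_cases hk : k = 0
    · simpa [hk] using hasConst_C (1 : L)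
    · simpa [coeff_one, hk] using hasConst_C (0 : L)
  | insert i S hi ih =>
    have hri := hr i (Finset.mem_insert_self i S)
    have hS := ih fun j hj => hr j (Finset.mem_insert_of_mem hj)
    rw [Finset.prod_insert hi, Finset.prod_insert hi]
    cases k with
    | zero => simpa [mul_coeff_zero] using ((hasConst_C 0).sub hri).mul (hS 0)
    | succ k => simpa only [coeff_X_sub_C_mul] using (hS k).sub (hri.mul (hS (k + 1)))

end Specialization

section PowerSeriesFamily

variable {A L : Type*} [CommRing A] [Field L] (φ : A →+* L)

theorem hasConst_Phi (f : PowerSeries A) :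
    HasConst (Phi φ f) (φ (PowerSeries.constantCoeff f)) := by
  constructor
  · simpa [Phi] using
      HahnSeries.ofPowerSeries_apply_coeff (Γ := ℚ) (PowerSeries.map φ f) 0
  · intro q hq
    refine HahnSeries.embDomain_of_notMem_range ?_
    rintro ⟨n, rfl⟩
    exact hq.not_ge n.cast_nonneg

theorem Phi_X_mul (f : PowerSeries A) :
    Phi φ (PowerSeries.X * f) = HahnSeries.single 1 1 * Phi φ f := by
  simp [Phi]

theorem one_le_orderTop_Phi {f : PowerSeries A} (h0 : PowerSeries.constantCoeff f = 0) :
    1 ≤ (Phi φ f).orderTop := by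
  obtain ⟨g, rfl⟩ := PowerSeries.X_dvd_iff.2 h0
  rw [Phi_X_mul, HahnSeries.orderTop_mul, HahnSeries.orderTop_single one_ne_zero]
  exact le_add_of_nonneg_right (hasConst_Phi φ g).orderTop_nonneg

theorem orderTop_leadingCoeff_Phi_of_constantCoeff_eq_zero {f : PowerSeries A}
    (h0 : PowerSeries.constantCoeff f = 0) (h1 : φ (PowerSeries.coeff 1 f) ≠ 0) :
    (Phi φ f).orderTop = 1 ∧ (Phi φ f).leadingCoeff = φ (PowerSeries.coeff 1 f) := by
  obtain ⟨g, rfl⟩ := PowerSeries.X_dvd_iff.2 h0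
  have hcoeff : PowerSeries.coeff 1 (PowerSeries.X * g) = PowerSeries.constantCoeff g := by
    simp [PowerSeries.coeff_succ_X_mul 0 g]
  rw [hcoeff] at h1 ⊢
  have hg := hasConst_Phi φ g
  rw [Phi_X_mul, HahnSeries.orderTop_mul, HahnSeries.leadingCoeff_mul,
    HahnSeries.orderTop_single one_ne_zero, HahnSeries.leadingCoeff_of_single,
    hg.orderTop_eq_zero h1, hg.leadingCoeff_eq h1]
  exact ⟨add_zero _, one_mul _⟩

variable {φ} {F : (PowerSeries A)[X]}

theorem hasConst_of_map_Phi_eq_C_mul {c : HahnSeries ℚ L} {M : (HahnSeries ℚ L)[X]}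
    (hF : F.map (Phi φ) = C c * M) (hM : M.Monic)
    (hF0 : ((F.map PowerSeries.constantCoeff).map φ).Monic)
    (hdeg : ((F.map PowerSeries.constantCoeff).map φ).natDegree = M.natDegree) :
    HasConst c 1 := by
  have hconst := hasConst_Phi φ (F.coeff M.natDegree)
  rwa [← coeff_map, hF, coeff_C_mul, hM.coeff_natDegree, mul_one, ← coeff_map, ← coeff_map,
    ← hdeg, hF0.coeff_natDegree] at hconst

theorem coeff_fam {N j : ℕ} (p : ℕ → A[X]) (hj : j ≤ N) :
    (fam N p).coeff j = PowerSeries.mk fun i => (p i).coeff j := by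
  simp [fam, coeff_X_pow, Nat.lt_succ_of_le hj]

theorem map_constantCoeff_fam {N : ℕ} {p : ℕ → A[X]} (hdeg : (p 0).natDegree ≤ N) :
    (fam N p).map PowerSeries.constantCoeff = p 0 := by
  simp [fam, Polynomial.map_sum, ← (p 0).as_sum_range_C_mul_X_pow' (Nat.lt_succ_of_le hdeg)]

theorem coeff_one_coeff_zero_fam (N : ℕ) (p : ℕ → A[X]) :
    PowerSeries.coeff 1 ((fam N p).coeff 0) = (p 1).eval 0 := by
  rw [coeff_fam p N.zero_le, PowerSeries.coeff_mk, coeff_zero_eq_eval_zero]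

end PowerSeriesFamily

section FirstKind

variable {A L ι : Type*} [CommRing A] [Field L] [Fintype ι] {φ : A →+* L}
  {F : (PowerSeries A)[X]} {P : A[X]} {a : ι → L} {u v c : HahnSeries ℚ L}
  {r : ι → HahnSeries ℚ L}

theorem hasConst_one_of_firstKind
    (hF0 : F.map PowerSeries.constantCoeff = X ^ 2 * P) (hP : P.map φ = ∏ i, (X - C (a i)))
    (hsplit : F.map (Phi φ) = C c * ((X - C u) * (X - C v) * ∏ i, (X - C (r i)))) :
    HasConst c 1 := by
  have hQ : ((X - C u) * (X - C v)).Monic := (monic_X_sub_C u).mul (monic_X_sub_C v)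
  have hF0φ : (F.map PowerSeries.constantCoeff).map φ = X ^ 2 * ∏ i, (X - C (a i)) := by
    rw [hF0, Polynomial.map_mul, hP, Polynomial.map_pow, map_X]
  refine hasConst_of_map_Phi_eq_C_mul hsplit (hQ.mul (monic_prod_X_sub_C r univ)) ?_ ?_
  · rw [hF0φ]
    exact (monic_X_pow 2).mul (monic_prod_X_sub_C a univ)
  · rw [hF0φ, (monic_X_pow 2).natDegree_mul (monic_prod_X_sub_C a univ),
      hQ.natDegree_mul (monic_prod_X_sub_C r univ),
      (monic_X_sub_C u).natDegree_mul (monic_X_sub_C v)]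
    simp

theorem leadingCoeff_sub_sq_of_firstKind (h2 : (2 : L) ≠ 0)
    (hF0 : F.map PowerSeries.constantCoeff = X ^ 2 * P) (hP : P.map φ = ∏ i, (X - C (a i)))
    (hP0 : φ (P.eval 0) ≠ 0) (hF1 : φ (PowerSeries.coeff 1 (F.coeff 0)) ≠ 0)
    (hr : ∀ i, HasConst (r i) (a i))
    (hsplit : F.map (Phi φ) = C c * ((X - C u) * (X - C v) * ∏ i, (X - C (r i)))) :
    φ (P.eval 0) * ((u - v) ^ 2).leadingCoeff = -4 * φ (PowerSeries.coeff 1 (F.coeff 0)) := by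
  set Q := C c * ∏ i, (X - C (r i)) with hQ_def
  have hc : HasConst c 1 := hasConst_one_of_firstKind hF0 hP hsplit
  have hQ (k : ℕ) : HasConst (Q.coeff k) (φ (P.coeff k)) := by
    simpa only [hQ_def, coeff_C_mul, ← hP, coeff_map, one_mul] using
      hc.mul (HasConst.coeff_prod_X_sub_C univ (fun i _ => hr i) k)
  have hF_eq : F.map (Phi φ) = (X - C u) * (X - C v) * Q := by
    rw [hsplit]
    ring
  have hF_low {j : ℕ} (hj : j < 2) : PowerSeries.constantCoeff (F.coeff j) = 0 := by
    rw [← coeff_map, hF0, coeff_X_pow_mul', if_neg hj.not_ge]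
  obtain ⟨hF0_order, hF0_lead⟩ :=
    orderTop_leadingCoeff_Phi_of_constantCoeff_eq_zero φ (hF_low zero_lt_two) hF1
  have hP0' : φ (P.coeff 0) ≠ 0 := by rwa [coeff_zero_eq_eval_zero]
  have key := leadingCoeff_sub_sq_of_eq_mul h2 hF_eq ((hQ 0).orderTop_eq_zero hP0')
    (hQ 1).orderTop_nonneg (zero_lt_one (α := ℚ)) (by rwa [coeff_map])
    (by rw [coeff_map]; exact one_le_orderTop_Phi φ (hF_low one_lt_two))
  rwa [(hQ 0).leadingCoeff_eq hP0', coeff_map, hF0_lead, coeff_zero_eq_eval_zero] at key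

/-- Here `t` is the power series variable, so `hF0` reads `F(x, 0) = x² P(x)` and `b` is the
coefficient of `t` in `F(0, t)`. -/
theorem stmt4_general (h2 : (2 : L) ≠ 0)
    (hF0 : F.map PowerSeries.constantCoeff = X ^ 2 * P) {b : A}
    (hF1 : PowerSeries.coeff 1 (F.coeff 0) = b) (hPb : φ (P.eval 0 * b) ≠ 0)
    (hP : P.map φ = ∏ i, (X - C (a i))) (hr : ∀ i, HasConst (r i) (a i))
    (hsplit : F.map (Phi φ) = C c * ((X - C u) * (X - C v) * ∏ i, (X - C (r i)))) :
    lim0 ((∏ i, (HahnSeries.C (0 : L) - r i)) ^ (2 * 2 - 2) * (u - v) ^ 2) *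
        (∏ i, lim0 (((HahnSeries.C (a i) - u) * (HahnSeries.C (a i) - v)) ^ (2 * 1 - 2))) *
        (∏ i, ((0 : L) - a i)) ^ (2 * ((2 : ℤ) + 1 - 2 * 1)) =
      -4 * φ b * φ (P.eval 0) ^ 3 := by
  subst hF1
  obtain ⟨hP0, hb⟩ := mul_ne_zero_iff.1 (map_mul φ _ _ ▸ hPb)
  have hres : ∏ i, ((0 : L) - a i) = φ (P.eval 0) := by
    rw [← coeff_zero_eq_eval_zero, ← coeff_map, hP, coeff_zero_prod]
    simp
  have hsimple : HasConst (∏ i, (HahnSeries.C (0 : L) - r i)) (φ (P.eval 0)) := by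
    simpa [coeff_zero_prod, ← hres] using HasConst.coeff_prod_X_sub_C univ (fun i _ => hr i) 0
  have hdisc := leadingCoeff_sub_sq_of_firstKind h2 hF0 hP hP0 hb hr hsplit
  have hzpow : φ (P.eval 0) ^ (2 * ((2 : ℤ) + 1 - 2 * 1)) = φ (P.eval 0) ^ 2 :=
    zpow_ofNat _ 2
  have hlim : lim0 ((∏ i, (HahnSeries.C (0 : L) - r i)) ^ (2 * 2 - 2) * (u - v) ^ 2) =
      φ (P.eval 0) ^ 2 * ((u - v) ^ 2).leadingCoeff := by
    rw [lim0_eq_leadingCoeff, show 2 * 2 - 2 = 2 from rfl, sq (∏ i, _),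
      HahnSeries.leadingCoeff_mul, HahnSeries.leadingCoeff_mul, hsimple.leadingCoeff_eq hP0,
      sq (φ _)]
  have hone : ∏ i, lim0 (((HahnSeries.C (a i) - u) * (HahnSeries.C (a i) - v)) ^ (2 * 1 - 2)) =
      1 :=
    prod_eq_one fun i _ => by simp [lim0_eq_leadingCoeff]
  rw [hlim, hone, hres, hzpow]
  linear_combination φ (P.eval 0) ^ 3 * hdisc

end FirstKind

/-- **Proposition 3.2** (families of the first kind).  Let
`F(x,t) = x² A_{n−2}(x) + B_n(x) t + O(t²)` with `A_{n−2}(0)·B_n(0) ≠ 0` and `A_{n−2}`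
square-free.  Then `ver(F) = −4 B_n(0) A_{n−2}(0)³`.
Here `F_0 = x² A_{n−2}` has the factors `f_1 = x` (multiplicity `2`, `t`-roots `u, v`)
and `f_2 = A_{n−2} = ∏ᵢ (x − aA i)` (multiplicity `1`, `t`-roots `r i`), and `ver(F)`
is written out according to Definition 3.1. -/
theorem stmt4 {A L : Type*} [CommRing A] [IsDomain A]
    [Field L] [IsAlgClosed L] [CharZero L]
    (φ : A →+* L) (hφ : Function.Injective φ)
    (N : ℕ) (hN : 2 ≤ N)
    (Aq Bq : Polynomial A) (hAmonic : Aq.Monic) (hAdeg : Aq.natDegree = N - 2)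
    (hBdeg : Bq.natDegree ≤ N) (hsqfree : Squarefree Aq)
    (hAB : Aq.eval 0 * Bq.eval 0 ≠ 0)
    (p : ℕ → Polynomial A) (hdeg : ∀ i, (p i).natDegree ≤ N)
    (hp0 : p 0 = X ^ 2 * Aq) (hp1 : p 1 = Bq)
    (aA : Fin (N - 2) → L) (haInj : Function.Injective aA) (haNe : ∀ i, aA i ≠ 0)
    (hAfac : Aq.map φ = ∏ i, (X - C (aA i)))
    (u v : HahnSeries ℚ L) (hu : HasConst u 0) (hv : HasConst v 0)
    (r : Fin (N - 2) → HahnSeries ℚ L) (hr : ∀ i, HasConst (r i) (aA i))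
    (c : HahnSeries ℚ L)
    (hsplit : (fam N p).map (Phi φ) =
      C c * ((X - C u) * (X - C v) * ∏ i, (X - C (r i)))) :
    lim0 ((∏ i, (HahnSeries.C (0 : L) - r i)) ^ (2 * 2 - 2) * (u - v) ^ 2) *
        (∏ i, lim0 (((HahnSeries.C (aA i) - u) * (HahnSeries.C (aA i) - v)) ^
          (2 * 1 - 2))) *
        (∏ i, ((0 : L) - aA i)) ^ (2 * ((2 : ℤ) + 1 - 2 * 1)) =
      -4 * φ (Bq.eval 0) * φ (Aq.eval 0) ^ 3 := by
  exact stmt4_general two_ne_zero ((map_constantCoeff_fam (hdeg 0)).trans hp0)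
    (hp1 ▸ coeff_one_coeff_zero_fam N p) ((map_ne_zero_iff φ hφ).2 hAB) hAfac hr hsplit
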